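/- For every integer n ≥ 0, A_n·ζ(3) − B_n > 0, and the sequence A_n·ζ(3) − B_n tends to 0 as n → ∞. -/

import Mathlib

/-- The Apéry sequence `A_n = ∑_{ℓ=0}^n binom(n,ℓ)² binom(n+ℓ,ℓ)²`. -/
def aperyA (n : ℕ) : ℕ :=
  ∑ ℓ ∈ Finset.range (n + 1), (n.choose ℓ) ^ 2 * ((n + ℓ).choose ℓ) ^ 2

/-- The second Apéry sequence (with `B_0 = 0`). -/
noncomputable def aperyB (n : ℕ) : ℚ :=
  ∑ ℓ ∈ Finset.range (n + 1),
    ((n.choose ℓ : ℚ)) ^ 2 * (((n + ℓ).choose ℓ : ℚ)) ^ 2 *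
      ((∑ m ∈ Finset.Icc 1 n, (1 : ℚ) / (m : ℚ) ^ 3) -
        ∑ m ∈ Finset.Icc 1 ℓ,
          (-1 : ℚ) ^ m / (2 * (m : ℚ) ^ 3 * (n.choose m : ℚ) * ((n + m).choose m : ℚ)))

noncomputable def apT (n k : ℕ) : ℝ := (n.choose k : ℝ) * ((n + k).choose k : ℝ)

noncomputable def apH (n : ℕ) : ℝ := ∑ m ∈ Finset.range n, (1 : ℝ) / ((m : ℝ) + 1) ^ 3

noncomputable def apC (n k : ℕ) : ℝ :=
  apH n + ∑ m ∈ Finset.range k, (-1 : ℝ) ^ m / (2 * ((m : ℝ) + 1) ^ 3 * apT n (m + 1))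

noncomputable def apP (n : ℕ) : ℝ := 34 * (n : ℝ) ^ 3 + 51 * (n : ℝ) ^ 2 + 27 * n + 5

lemma apT_succ_right (n k : ℕ) :
    apT n (k + 1) * ((k : ℝ) + 1) ^ 2 = apT n k * ((n : ℝ) - k) * (n + k + 1) := by
  have h1 : (n.choose (k + 1) : ℝ) * (k + 1) = n.choose k * ((n : ℝ) - k) := by
    rcases le_or_gt k n with h | h
    · have := Nat.choose_succ_right_eq n k
      have h2 : ((n - k : ℕ) : ℝ) = (n : ℝ) - k := by push_cast [h]; ring
      rw [← h2]; exact_mod_cast this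
    · rw [Nat.choose_eq_zero_of_lt h, Nat.choose_eq_zero_of_lt (by omega)]; simp
  have h2 : ((n + (k + 1)).choose (k + 1) : ℝ) * (k + 1) = (n + k).choose k * ((n : ℝ) + k + 1) := by
    have := Nat.add_one_mul_choose_eq (n + k) k
    have h3 : ((n : ℝ) + k + 1) * (n + k).choose k = (n + k + 1).choose (k + 1) * ((k : ℝ) + 1) := by
      exact_mod_cast this
    rw [← add_assoc]; linarith
  unfold apT
  linear_combination ((n + (k + 1)).choose (k + 1) : ℝ) * (k + 1) * h1 +
    n.choose k * ((n : ℝ) - k) * h2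

lemma apT_succ_left (n k : ℕ) :
    apT (n + 1) k * ((n : ℝ) + 1 - k) = apT n k * (n + 1 + k) := by
  have h1 : ((n + 1).choose k : ℝ) * ((n : ℝ) + 1 - k) = n.choose k * (n + 1) := by
    rcases le_or_gt k (n + 1) with h | h
    · have := Nat.choose_mul_succ_eq n k
      have h2 : ((n + 1 - k : ℕ) : ℝ) = (n : ℝ) + 1 - k := by push_cast [h]; ring
      rw [← h2]; exact_mod_cast this.symm
    · rw [Nat.choose_eq_zero_of_lt h, Nat.choose_eq_zero_of_lt (by omega)]; simp
  have h2 : ((n + 1 + k).choose k : ℝ) * (n + 1) = (n + k).choose k * ((n : ℝ) + 1 + k) := by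
    have := Nat.choose_mul_succ_eq (n + k) k
    have h3 : n + k + 1 - k = n + 1 := by omega
    rw [h3] at this
    have e : n + 1 + k = n + k + 1 := by omega
    rw [e]
    have h4 : ((n + k).choose k : ℝ) * (n + k + 1) = (n + k + 1).choose k * ((n : ℝ) + 1) := by
      exact_mod_cast this
    linarith
  unfold apT
  linear_combination ((n + 1 + k).choose k : ℝ) * h1 + n.choose k * h2

lemma apT_pos {n k : ℕ} (h : k ≤ n) : 0 < apT n k := by
  unfold apT
  have := Nat.choose_pos h
  have := Nat.choose_pos (show k ≤ n + k by omega)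
  positivity

lemma apT_zero {n k : ℕ} (h : n < k) : apT n k = 0 := by
  unfold apT
  rw [Nat.choose_eq_zero_of_lt h]; simp

lemma apT_zero_right (n : ℕ) : apT n 0 = 1 := by simp [apT]

lemma apC_succ (n k : ℕ) :
    apC n (k + 1) = apC n k + (-1 : ℝ) ^ k / (2 * ((k : ℝ) + 1) ^ 3 * apT n (k + 1)) := by
  unfold apC; rw [Finset.sum_range_succ]; ring

lemma apH_succ (n : ℕ) : apH (n + 1) = apH n + 1 / ((n : ℝ) + 1) ^ 3 := by
  unfold apH; rw [Finset.sum_range_succ]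

/-- `c_{n+1,k} - c_{n,k}` in closed form. -/
lemma apC_succ_left (n k : ℕ) (h : k ≤ n) :
    apC (n + 1) k = apC n k + (-1 : ℝ) ^ k / (((n : ℝ) + 1) ^ 2 * (n + 1 + k) * apT n k) := by
  induction k with
  | zero =>
    simp [apC, apH_succ, apT_zero_right]; field_simp
  | succ k ih =>
    have ih := ih (by omega)
    rw [apC_succ, apC_succ, ih]
    have hk : (k : ℝ) + 1 ≤ n := by exact_mod_cast h
    have p0 : (0 : ℝ) ≤ k := by positivity
    have a1 : (n : ℝ) - k ≠ 0 := by linarith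
    have a2 : (n : ℝ) + k + 1 ≠ 0 := by linarith
    have a3 : (k : ℝ) + 1 ≠ 0 := by linarith
    have a4 : (n : ℝ) + 1 ≠ 0 := by linarith
    have a5 : (n : ℝ) + k + 2 ≠ 0 := by linarith
    have a6 : (n : ℝ) + 1 + k ≠ 0 := by linarith
    have a7 : (n : ℝ) + 1 + (k + 1) ≠ 0 := by linarith
    have hT : apT n k ≠ 0 := (apT_pos (by omega)).ne'
    have e1 : apT n (k + 1) = apT n k * ((n : ℝ) - k) * (n + k + 1) / ((k : ℝ) + 1) ^ 2 := by
      rw [eq_div_iff (by positivity)]; exact apT_succ_right n k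
    have e2 : apT (n + 1) (k + 1) = apT n (k + 1) * (n + k + 2) / ((n : ℝ) - k) := by
      rw [eq_div_iff a1]
      have := apT_succ_left n (k + 1)
      push_cast at this
      linear_combination this
    rw [e2, e1]
    push_cast
    rw [pow_succ]
    field_simp
    ring

noncomputable def apU (n k : ℕ) : ℝ :=
  4 * (2 * (n : ℝ) + 1) * (k * (2 * k + 1) - (2 * n + 1) ^ 2) * apT n k ^ 2

noncomputable def apW (n k : ℕ) : ℝ :=
  5 * (2 * (n : ℝ) + 1) * (-1) ^ (k + 1) * k / (n * (n + 1)) * apT n k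

noncomputable def apSumA (n j : ℕ) : ℝ := ∑ k ∈ Finset.range (j + 1), apT n k ^ 2
noncomputable def apSumB (n j : ℕ) : ℝ := ∑ k ∈ Finset.range (j + 1), apT n k ^ 2 * apC n k

/-- one-step identities, `N = n+1`, `k ≤ n+1` -/
lemma ap_term (n k : ℕ) (h : k ≤ n + 1) :
    ((n : ℝ) + 2) ^ 3 * (apT (n + 2) k ^ 2 * apC (n + 2) k)
      - apP (n + 1) * (apT (n + 1) k ^ 2 * apC (n + 1) k)
      + ((n : ℝ) + 1) ^ 3 * (apT n k ^ 2 * apC n k)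
    = apT (n + 1) k ^ 2 * apC (n + 1) k *
        (((n : ℝ) + 2) ^ 3 * (n + 2 + k) ^ 2 / (n + 2 - k) ^ 2 - apP (n + 1)
          + (n + 1) ^ 3 * (n + 1 - k) ^ 2 / (n + 1 + k) ^ 2)
      + (-1) ^ k * apT (n + 1) k *
        ((n + 2) * (n + 2 + k) / (n + 2 - k) ^ 2 - (n + 1) * (n + 1 - k) / (n + 1 + k) ^ 2) := by
  have hk : (k : ℝ) ≤ n + 1 := by exact_mod_cast h
  have p0 : (0 : ℝ) ≤ k := by positivity
  have pn : (0 : ℝ) ≤ n := by positivity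
  have a1 : (n : ℝ) + 2 - k ≠ 0 := by linarith
  have a2 : (n : ℝ) + 1 + k ≠ 0 := by linarith
  have a3 : (n : ℝ) + 2 + k ≠ 0 := by linarith
  have a4 : (n : ℝ) + 2 ≠ 0 := by linarith
  have a5 : (n : ℝ) + 1 ≠ 0 := by linarith
  have hT : apT (n + 1) k ≠ 0 := (apT_pos h).ne'
  have e2 : apT (n + 2) k = apT (n + 1) k * (n + 2 + k) / ((n : ℝ) + 2 - k) := by
    rw [eq_div_iff a1]
    have := apT_succ_left (n + 1) k
    push_cast at this
    linear_combination this
  have e0 : apT n k = apT (n + 1) k * ((n : ℝ) + 1 - k) / (n + 1 + k) := by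
    rw [eq_div_iff a2]
    linear_combination - apT_succ_left n k
  have c2 : apC (n + 2) k = apC (n + 1) k
      + (-1 : ℝ) ^ k / (((n : ℝ) + 2) ^ 2 * (n + 2 + k) * apT (n + 1) k) := by
    have := apC_succ_left (n + 1) k h
    rw [this]; push_cast; ring
  have c0 : apT n k ^ 2 * apC n k = apT n k ^ 2 * apC (n + 1) k
      - (-1 : ℝ) ^ k * apT (n + 1) k * ((n : ℝ) + 1 - k) / ((n + 1) ^ 2 * (n + 1 + k) ^ 2) := by
    rcases Nat.lt_or_ge n k with h' | h'
    · have : k = n + 1 := by omega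
      subst this
      rw [apT_zero h']; push_cast; simp
    · rw [apC_succ_left n k h']
      have hT0 : apT n k ≠ 0 := (apT_pos h').ne'
      have e1 : apT (n + 1) k * ((n : ℝ) + 1 - k) = apT n k * (n + 1 + k) := apT_succ_left n k
      rw [mul_assoc _ (apT (n + 1) k), e1]
      field_simp
      ring
  rw [c0, c2, e2, e0]
  field_simp
  ring

lemma ap_termA (n k : ℕ) (h : k ≤ n + 1) :
    ((n : ℝ) + 2) ^ 3 * (apT (n + 2) k ^ 2)
      - apP (n + 1) * (apT (n + 1) k ^ 2)
      + ((n : ℝ) + 1) ^ 3 * (apT n k ^ 2)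
    = apT (n + 1) k ^ 2 *
        (((n : ℝ) + 2) ^ 3 * (n + 2 + k) ^ 2 / (n + 2 - k) ^ 2 - apP (n + 1)
          + (n + 1) ^ 3 * (n + 1 - k) ^ 2 / (n + 1 + k) ^ 2) := by
  have hk : (k : ℝ) ≤ n + 1 := by exact_mod_cast h
  have p0 : (0 : ℝ) ≤ k := by positivity
  have pn : (0 : ℝ) ≤ n := by positivity
  have a1 : (n : ℝ) + 2 - k ≠ 0 := by linarith
  have a2 : (n : ℝ) + 1 + k ≠ 0 := by linarith
  have e2 : apT (n + 2) k = apT (n + 1) k * (n + 2 + k) / ((n : ℝ) + 2 - k) := by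
    rw [eq_div_iff a1]
    have := apT_succ_left (n + 1) k
    push_cast at this
    linear_combination this
  have e0 : apT n k = apT (n + 1) k * ((n : ℝ) + 1 - k) / (n + 1 + k) := by
    rw [eq_div_iff a2]
    linear_combination - apT_succ_left n k
  rw [e2, e0]
  field_simp

lemma ap_partial (n j : ℕ) (h : j ≤ n + 1) :
    ((n : ℝ) + 2) ^ 3 * apSumA (n + 2) j - apP (n + 1) * apSumA (n + 1) j
      + ((n : ℝ) + 1) ^ 3 * apSumA n j = apU (n + 1) j ∧
    ((n : ℝ) + 2) ^ 3 * apSumB (n + 2) j - apP (n + 1) * apSumB (n + 1) j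
      + ((n : ℝ) + 1) ^ 3 * apSumB n j = apU (n + 1) j * apC (n + 1) j + apW (n + 1) j := by
  induction j with
  | zero =>
    have hA := ap_termA n 0 (by omega)
    have hB := ap_term n 0 (by omega)
    have pn : (0 : ℝ) ≤ n := by positivity
    simp only [apSumA, apSumB, zero_add, Finset.sum_range_one]
    rw [hA, hB]
    simp only [apT_zero_right, apU, apW, apP]
    simp only [Nat.cast_zero, add_zero, sub_zero]
    have b1 : (n : ℝ) + 1 ≠ 0 := by positivity
    have b2 : (n : ℝ) + 2 ≠ 0 := by positivity
    push_cast
    constructor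
    · field_simp; ring
    · field_simp; ring
  | succ k ih =>
    obtain ⟨ihA, ihB⟩ := ih (by omega)
    have hA := ap_termA n (k + 1) h
    have hB := ap_term n (k + 1) h
    have hk : (k : ℝ) ≤ n := by exact_mod_cast (by omega : k ≤ n)
    have p0 : (0 : ℝ) ≤ k := by positivity
    have pn : (0 : ℝ) ≤ n := by positivity
    have a1 : (n : ℝ) + 1 - k ≠ 0 := by linarith
    have a2 : (n : ℝ) + k + 2 ≠ 0 := by linarith
    have a3 : (k : ℝ) + 1 ≠ 0 := by linarith
    have a4 : (n : ℝ) + 1 ≠ 0 := by linarith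
    have a5 : (n : ℝ) + 2 ≠ 0 := by linarith
    have hT : apT (n + 1) k ≠ 0 := (apT_pos (by omega)).ne'
    have hT1 : apT (n + 1) (k + 1) ≠ 0 := (apT_pos h).ne'
    have e1 : apT (n + 1) k = apT (n + 1) (k + 1) * ((k : ℝ) + 1) ^ 2 /
        (((n : ℝ) + 1 - k) * (n + k + 2)) := by
      rw [eq_div_iff (by positivity)]
      have := apT_succ_right (n + 1) k
      push_cast at this
      linear_combination - this
    have c1 := apC_succ (n + 1) k
    have c1' : apC (n + 1) k = apC (n + 1) (k + 1) -
      (-1 : ℝ) ^ k / (2 * ((k : ℝ) + 1) ^ 3 * apT (n + 1) (k + 1)) := by rw [c1]; ring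
    have s1 : (n : ℝ) + 2 - ((k + 1 : ℕ) : ℝ) = n + 1 - k := by push_cast; ring
    have s2 : (n : ℝ) + 1 + ((k + 1 : ℕ) : ℝ) = n + k + 2 := by push_cast; ring
    rw [s1, s2] at hA hB
    constructor
    · simp only [apSumA] at ihA ⊢
      simp only [Finset.sum_range_succ _ (k + 1)]
      have : apU (n + 1) (k + 1) - apU (n + 1) k = apT (n + 1) (k + 1) ^ 2 *
        (((n : ℝ) + 2) ^ 3 * (n + 2 + (k + 1 : ℕ)) ^ 2 / (n + 1 - k) ^ 2 - apP (n + 1)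
          + (n + 1) ^ 3 * (n + 1 - (k + 1 : ℕ)) ^ 2 / (n + k + 2) ^ 2) := by
        simp only [apU, apP]
        rw [e1]
        push_cast
        field_simp
        ring
      linear_combination ihA + hA - this
    · simp only [apSumB] at ihB ⊢
      simp only [Finset.sum_range_succ _ (k + 1)]
      have : apU (n + 1) (k + 1) * apC (n + 1) (k + 1) + apW (n + 1) (k + 1)
        - (apU (n + 1) k * apC (n + 1) k + apW (n + 1) k) =
        apT (n + 1) (k + 1) ^ 2 * apC (n + 1) (k + 1) *
        (((n : ℝ) + 2) ^ 3 * (n + 2 + (k + 1 : ℕ)) ^ 2 / (n + 1 - k) ^ 2 - apP (n + 1)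
          + (n + 1) ^ 3 * (n + 1 - (k + 1 : ℕ)) ^ 2 / (n + k + 2) ^ 2)
      + (-1) ^ (k + 1) * apT (n + 1) (k + 1) *
        ((n + 2) * (n + 2 + (k + 1 : ℕ)) / (n + 1 - k) ^ 2
          - (n + 1) * (n + 1 - (k + 1 : ℕ)) / (n + k + 2) ^ 2) := by
        simp only [apU, apP, apW]
        rw [c1', e1]
        push_cast
        rw [pow_succ, pow_succ]
        field_simp
        ring
      linear_combination ihB + hB - this

lemma ap_recA (n : ℕ) :
    ((n : ℝ) + 2) ^ 3 * apSumA (n + 2) (n + 2) - apP (n + 1) * apSumA (n + 1) (n + 1)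
      + ((n : ℝ) + 1) ^ 3 * apSumA n n = 0 := by
  have h := (ap_partial n (n + 1) le_rfl).1
  have h1 : apSumA n (n + 1) = apSumA n n := by
    simp only [apSumA]; rw [Finset.sum_range_succ, apT_zero (Nat.lt_succ_self n)]; simp
  have h2 : apSumA (n + 2) (n + 2) = apSumA (n + 2) (n + 1) + apT (n + 2) (n + 2) ^ 2 := by
    simp only [apSumA]; rw [Finset.sum_range_succ]
  have e1 := apT_succ_right (n + 2) (n + 1)
  have e2 := apT_succ_left (n + 1) (n + 1)
  push_cast at e1 e2
  rw [h1] at h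
  rw [h2]
  have pn : (0 : ℝ) ≤ n := by positivity
  have e3 : apT (n + 2) (n + 2) = 2 * (2 * n + 3) * apT (n + 1) (n + 1) / ((n : ℝ) + 2) := by
    rw [eq_div_iff (by positivity)]
    have : ((n : ℝ) + 2) ≠ 0 := by positivity
    apply mul_right_cancel₀ this
    linear_combination e1 + (2 * (n : ℝ) + 4) * e2
  rw [e3]
  simp only [apU] at h
  push_cast at h
  field_simp
  linear_combination h

lemma ap_recB (n : ℕ) :
    ((n : ℝ) + 2) ^ 3 * apSumB (n + 2) (n + 2) - apP (n + 1) * apSumB (n + 1) (n + 1)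
      + ((n : ℝ) + 1) ^ 3 * apSumB n n = 0 := by
  have h := (ap_partial n (n + 1) le_rfl).2
  have h1 : apSumB n (n + 1) = apSumB n n := by
    simp only [apSumB]; rw [Finset.sum_range_succ, apT_zero (Nat.lt_succ_self n)]; simp
  have h2 : apSumB (n + 2) (n + 2) = apSumB (n + 2) (n + 1)
      + apT (n + 2) (n + 2) ^ 2 * apC (n + 2) (n + 2) := by
    simp only [apSumB]; rw [Finset.sum_range_succ]
  have e1 := apT_succ_right (n + 2) (n + 1)
  have e2 := apT_succ_left (n + 1) (n + 1)
  push_cast at e1 e2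
  rw [h1] at h
  rw [h2]
  have pn : (0 : ℝ) ≤ n := by positivity
  have hT : apT (n + 1) (n + 1) ≠ 0 := (apT_pos le_rfl).ne'
  have e3 : apT (n + 2) (n + 2) = 2 * (2 * n + 3) * apT (n + 1) (n + 1) / ((n : ℝ) + 2) := by
    rw [eq_div_iff (by positivity)]
    have : ((n : ℝ) + 2) ≠ 0 := by positivity
    apply mul_right_cancel₀ this
    linear_combination e1 + (2 * (n : ℝ) + 4) * e2
  have c1 := apC_succ (n + 2) (n + 1)
  rw [apC_succ_left (n + 1) (n + 1) le_rfl] at c1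
  rw [c1, e3]
  simp only [apU, apW] at h
  push_cast at h ⊢
  have s1 : (n : ℝ) + 1 + 1 + (n + 1) = 2 * n + 3 := by ring
  rw [s1]
  rw [pow_succ (-1 : ℝ) (n + 1)] at h
  field_simp at h ⊢
  linear_combination ((n : ℝ) + 2) ^ 2 * h

lemma ap_cas (n : ℕ) :
    (apSumB (n + 1) (n + 1) * apSumA n n - apSumB n n * apSumA (n + 1) (n + 1)) *
      ((n : ℝ) + 1) ^ 3 = 6 := by
  induction n with
  | zero =>
    simp [apSumA, apSumB, Finset.sum_range_succ, apT, apC, apH]; norm_num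
  | succ n ih =>
    have hA := ap_recA n
    have hB := ap_recB n
    push_cast
    linear_combination ih + apSumA (n + 1) (n + 1) * hB - apSumB (n + 1) (n + 1) * hA

lemma ap_castA (n : ℕ) : (aperyA n : ℝ) = apSumA n n := by
  simp only [aperyA, apSumA, apT]; push_cast
  exact Finset.sum_congr rfl fun k _ => by ring

lemma ap_castB (n : ℕ) : (aperyB n : ℝ) = apSumB n n := by
  simp only [aperyB, apSumB, apC, apH]; push_cast
  refine Finset.sum_congr rfl fun k _ => ?_
  have h1 : ∑ m ∈ Finset.Icc 1 n, (1 : ℝ) / (m : ℝ) ^ 3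
      = ∑ m ∈ Finset.range n, (1 : ℝ) / ((m : ℝ) + 1) ^ 3 := by
    rw [← Finset.Ico_add_one_right_eq_Icc, Finset.sum_Ico_eq_sum_range]
    refine Finset.sum_congr (by simp) fun m _ => ?_
    push_cast; rw [add_comm]
  have h2 : ∑ m ∈ Finset.Icc 1 k,
          (-1 : ℝ) ^ m / (2 * (m : ℝ) ^ 3 * (n.choose m : ℝ) * ((n + m).choose m : ℝ))
      = - ∑ m ∈ Finset.range k, (-1 : ℝ) ^ m / (2 * ((m : ℝ) + 1) ^ 3 * apT n (m + 1)) := by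
    rw [← Finset.Ico_add_one_right_eq_Icc, Finset.sum_Ico_eq_sum_range, ← Finset.sum_neg_distrib]
    refine Finset.sum_congr (by simp) fun m _ => ?_
    rw [add_comm 1 m, apT, pow_succ]
    push_cast
    ring
  rw [h1, h2, apT]
  ring

lemma ap_summable : Summable (fun m : ℕ => 1 / ((m : ℝ) + 1) ^ 3) := by
  have := (summable_nat_add_iff 1).2 (Real.summable_one_div_nat_pow.2 (by norm_num : 1 < 3))
  simpa using this

lemma ap_tendH :
    Filter.Tendsto apH Filter.atTop (nhds (∑' m : ℕ, 1 / ((m : ℝ) + 1) ^ 3)) :=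
  ap_summable.hasSum.tendsto_sum_nat

lemma apT_ge {n m : ℕ} (h : m + 1 ≤ n) : (n : ℝ) + 1 ≤ apT n (m + 1) := by
  have h1 : 1 ≤ n.choose (m + 1) := Nat.choose_pos h
  have h2 : n + 1 ≤ (n + (m + 1)).choose (m + 1) := by
    have h3 : (n + 1).choose n ≤ (n + (m + 1)).choose n := Nat.choose_le_choose n (by omega)
    rw [Nat.choose_succ_self_right] at h3
    rwa [Nat.choose_symm_add] at h3
  unfold apT
  have : n + 1 ≤ n.choose (m + 1) * (n + (m + 1)).choose (m + 1) := by nlinarith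
  exact_mod_cast this

lemma apC_bound {n k : ℕ} (h : k ≤ n) :
    |apC n k - apH n| ≤ (∑' m : ℕ, 1 / ((m : ℝ) + 1) ^ 3) / (n + 1) := by
  have e : apC n k - apH n =
    ∑ m ∈ Finset.range k, (-1 : ℝ) ^ m / (2 * ((m : ℝ) + 1) ^ 3 * apT n (m + 1)) := by
    unfold apC; ring
  rw [e]
  refine (Finset.abs_sum_le_sum_abs _ _).trans ?_
  calc _ ≤ ∑ m ∈ Finset.range k, (1 / ((m : ℝ) + 1) ^ 3) / ((n : ℝ) + 1) := by
        refine Finset.sum_le_sum fun m hm => ?_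
        have hm' : m + 1 ≤ n := by have := Finset.mem_range.1 hm; omega
        have h1 := apT_ge hm'
        have h0 := apT_pos hm'
        rw [abs_div, abs_pow, abs_neg, abs_one, one_pow, div_div, abs_of_pos (by positivity)]
        have h3 : (0 : ℝ) < ((m : ℝ) + 1) ^ 3 := by positivity
        apply one_div_le_one_div_of_le (by positivity)
        nlinarith [mul_le_mul_of_nonneg_left h1 h3.le, mul_pos h3 h0]
    _ = (∑ m ∈ Finset.range k, (1 / ((m : ℝ) + 1) ^ 3)) / ((n : ℝ) + 1) := by
        rw [Finset.sum_div]
    _ ≤ _ := by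
        gcongr
        exact ap_summable.sum_le_tsum _ (fun i _ => by positivity)

lemma ap_A_one_le (n : ℕ) : 1 ≤ apSumA n n := by
  unfold apSumA
  rw [Finset.sum_range_succ', apT_zero_right]
  have : 0 ≤ ∑ k ∈ Finset.range n, apT n (k + 1) ^ 2 :=
    Finset.sum_nonneg fun _ _ => sq_nonneg _
  linarith

lemma ap_A_mono : Monotone (fun n => apSumA n n) := by
  refine monotone_nat_of_le_succ fun n => ?_
  simp only [apSumA]
  rw [Finset.sum_range_succ _ (n + 1)]
  have : ∑ k ∈ Finset.range (n + 1), apT n k ^ 2 ≤ ∑ k ∈ Finset.range (n + 1), apT (n + 1) k ^ 2 := by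
    refine Finset.sum_le_sum fun k _ => ?_
    have h1 : n.choose k ≤ (n + 1).choose k := Nat.choose_le_choose k (by omega)
    have h2 : (n + k).choose k ≤ (n + 1 + k).choose k := Nat.choose_le_choose k (by omega)
    unfold apT
    gcongr
  nlinarith [sq_nonneg (apT (n + 1) (n + 1))]

noncomputable def apR (n : ℕ) : ℝ := apSumB n n / apSumA n n

lemma apR_bound (n : ℕ) :
    |apR n - apH n| ≤ (∑' m : ℕ, 1 / ((m : ℝ) + 1) ^ 3) / (n + 1) := by
  have hA : 0 < apSumA n n := by linarith [ap_A_one_le n]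
  have e : apR n - apH n =
      (∑ k ∈ Finset.range (n + 1), apT n k ^ 2 * (apC n k - apH n)) / apSumA n n := by
    rw [eq_div_iff hA.ne', apR, sub_mul, div_mul_cancel₀ _ hA.ne', apSumB, apSumA,
      Finset.mul_sum, ← Finset.sum_sub_distrib]
    exact Finset.sum_congr rfl fun _ _ => by ring
  rw [e, abs_div, abs_of_pos hA, div_le_iff₀ hA]
  refine (Finset.abs_sum_le_sum_abs _ _).trans ?_
  rw [apSumA, Finset.mul_sum]
  refine Finset.sum_le_sum fun k hk => ?_
  rw [abs_mul, abs_of_nonneg (sq_nonneg _), mul_comm]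
  exact mul_le_mul_of_nonneg_right
    (apC_bound (by have := Finset.mem_range.1 hk; omega)) (sq_nonneg _)

lemma apR_tendsto :
    Filter.Tendsto apR Filter.atTop (nhds (∑' m : ℕ, 1 / ((m : ℝ) + 1) ^ 3)) := by
  have h1 : Filter.Tendsto (fun n : ℕ => (∑' m : ℕ, 1 / ((m : ℝ) + 1) ^ 3) / ((n : ℝ) + 1))
      Filter.atTop (nhds 0) :=
    ((tendsto_const_div_atTop_nhds_zero_nat (∑' m : ℕ, 1 / ((m : ℝ) + 1) ^ 3)).comp
      (Filter.tendsto_add_atTop_nat 1)).congr fun n => by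
        simp only [Function.comp]; push_cast; rfl
  have h2 : Filter.Tendsto (fun n => apR n - apH n) Filter.atTop (nhds 0) :=
    squeeze_zero_norm (fun n => by rw [Real.norm_eq_abs]; exact apR_bound n) h1
  have h3 := h2.add ap_tendH
  rw [zero_add] at h3
  exact h3.congr fun n => by ring

lemma apR_step (n : ℕ) :
    apR (n + 1) - apR n = 6 / (((n : ℝ) + 1) ^ 3 * apSumA n n * apSumA (n + 1) (n + 1)) := by
  have h0 : apSumA n n ≠ 0 := by linarith [ap_A_one_le n]
  have h1 : apSumA (n + 1) (n + 1) ≠ 0 := by linarith [ap_A_one_le (n + 1)]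
  have h := ap_cas n
  have pn : (n : ℝ) + 1 ≠ 0 := by positivity
  unfold apR
  field_simp
  linear_combination h

lemma apR_strictMono : StrictMono apR := by
  refine strictMono_nat_of_lt_succ fun n => ?_
  have h0 : 0 < apSumA n n := by linarith [ap_A_one_le n]
  have h1 : 0 < apSumA (n + 1) (n + 1) := by linarith [ap_A_one_le (n + 1)]
  have : 0 < apR (n + 1) - apR n := by rw [apR_step]; positivity
  linarith

lemma apR_diff (n d : ℕ) :
    apSumA n n * (apR (n + d) - apR n) ≤ 6 * (apH (n + d) - apH n) := by
  induction d with
  | zero => simp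
  | succ d ih =>
    have h1 := apR_step (n + d)
    have h2 := apH_succ (n + d)
    have hA := ap_A_one_le (n + d + 1)
    have h0 := ap_A_one_le n
    have hm : apSumA n n ≤ apSumA (n + d) (n + d) := ap_A_mono (by omega)
    have : apSumA n n * (apR (n + d + 1) - apR (n + d)) ≤ 6 * (1 / (((n + d : ℕ) : ℝ) + 1) ^ 3) := by
      rw [h1]
      have hp : (0 : ℝ) < (((n + d : ℕ) : ℝ) + 1) ^ 3 := by positivity
      have hq : apSumA n n ≤ apSumA (n + d) (n + d) * apSumA (n + d + 1) (n + d + 1) := by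
        nlinarith
      have hr : 0 < apSumA (n + d) (n + d) := by linarith
      have hs : 0 < apSumA (n + d + 1) (n + d + 1) := by linarith
      rw [mul_div_assoc', mul_one_div, div_le_div_iff₀ (by positivity) hp]
      nlinarith [mul_le_mul_of_nonneg_left hq hp.le]
    rw [← add_assoc, h2]
    nlinarith

/-- For every `n ≥ 0` one has `A_n ζ(3) - B_n > 0`, and `A_n ζ(3) - B_n → 0` as
`n → ∞`. -/
theorem apery_difference_pos_tendsto_zero :
    (∀ n : ℕ,
      0 < (aperyA n : ℝ) * (∑' m : ℕ, 1 / ((m : ℝ) + 1) ^ 3) - (aperyB n : ℝ)) ∧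
    Filter.Tendsto
      (fun n : ℕ =>
        (aperyA n : ℝ) * (∑' m : ℕ, 1 / ((m : ℝ) + 1) ^ 3) - (aperyB n : ℝ))
      Filter.atTop (nhds 0) := by
  have key : ∀ n : ℕ, (aperyA n : ℝ) * (∑' m : ℕ, 1 / ((m : ℝ) + 1) ^ 3) - (aperyB n : ℝ)
      = apSumA n n * ((∑' m : ℕ, 1 / ((m : ℝ) + 1) ^ 3) - apR n) := by
    intro n
    have h0 : apSumA n n ≠ 0 := by linarith [ap_A_one_le n]
    rw [ap_castA, ap_castB, mul_sub, apR, mul_div_cancel₀ _ h0]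
  have pos : ∀ n : ℕ,
      0 < (aperyA n : ℝ) * (∑' m : ℕ, 1 / ((m : ℝ) + 1) ^ 3) - (aperyB n : ℝ) := by
    intro n
    rw [key]
    have h0 : 0 < apSumA n n := by linarith [ap_A_one_le n]
    have h1 : apR (n + 1) ≤ ∑' m : ℕ, 1 / ((m : ℝ) + 1) ^ 3 :=
      apR_strictMono.monotone.ge_of_tendsto apR_tendsto (n + 1)
    have h2 : apR n < apR (n + 1) := apR_strictMono (Nat.lt_succ_self n)
    exact mul_pos h0 (by linarith)
  refine ⟨pos, ?_⟩
  have up : ∀ n : ℕ, (aperyA n : ℝ) * (∑' m : ℕ, 1 / ((m : ℝ) + 1) ^ 3) - (aperyB n : ℝ)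
      ≤ 6 * ((∑' m : ℕ, 1 / ((m : ℝ) + 1) ^ 3) - apH n) := by
    intro n
    rw [key]
    have s : Filter.Tendsto (fun d : ℕ => n + d) Filter.atTop Filter.atTop :=
      Filter.tendsto_atTop_mono (fun d => by simp) Filter.tendsto_id
    exact le_of_tendsto_of_tendsto'
      (((apR_tendsto.comp s).sub_const (apR n)).const_mul (apSumA n n))
      (((ap_tendH.comp s).sub_const (apH n)).const_mul 6) (fun d => apR_diff n d)
  refine squeeze_zero (fun n => (pos n).le) up ?_
  have h4 := (ap_tendH.const_sub (∑' m : ℕ, 1 / ((m : ℝ) + 1) ^ 3)).const_mul 6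
  rw [sub_self, mul_zero] at h4
  exact h4
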